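/- arXiv:2305.12553 — 2 statements merged into one kernel-verified Lean document; each statement's English description precedes it below -/
import Mathlib

section
/- (Performance difference lemma for Markov games.) In a finite Markov game, for every player i, every profile π = (π_i,π_{-i}), every alternative policy π_i' of player i, and every probability distribution μ on S: V_i(μ,(π_i',π_{-i})) − V_i(μ,(π_i,π_{-i})) = (1/(1−δ))·∑_{s∈S} ∑_{a_i∈A_i} d_μ^{(π_i',π_{-i})}(s)·(π_i'(s,a_i) − π_i(s,a_i))·Q_i(s,a_i;(π_i,π_{-i})). -/
open Finset

section MarkovGameDefs

variable {S : Type*} {I : Type*} {A : I → Type*}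

/-- A probability vector on a finite set. -/
def IsProbVec {α : Type*} [Fintype α] (p : α → ℝ) : Prop :=
  (∀ a, 0 ≤ p a) ∧ ∑ a, p a = 1

/-- A stationary policy profile: each player's policy gives a probability vector at each state. -/
def IsPolicy [Fintype I] [∀ i, Fintype (A i)] (π : ∀ i, S → A i → ℝ) : Prop :=
  ∀ i s, IsProbVec (π i s)

/-- A transition kernel. -/
def IsKernel [Fintype S] (P : S → (∀ i, A i) → S → ℝ) : Prop :=
  ∀ s a, IsProbVec (fun s' => P s a s')

/-- Product distribution on joint actions induced by a profile. -/
noncomputable def jointDist [Fintype I] (π : ∀ i, S → A i → ℝ) (s : S) (a : ∀ i, A i) : ℝ :=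
  ∏ i, π i s (a i)

/-- Induced transition matrix `P^π`. -/
noncomputable def transMat [Fintype S] [Fintype I] [DecidableEq I] [∀ i, Fintype (A i)]
    (P : S → (∀ i, A i) → S → ℝ) (π : ∀ i, S → A i → ℝ) (s s' : S) : ℝ :=
  ∑ a : ∀ j, A j, jointDist π s a * P s a s'

/-- Expected one-stage payoff `u(s,π)`. -/
noncomputable def expPay [Fintype I] [DecidableEq I] [∀ i, Fintype (A i)]
    (u : S → (∀ i, A i) → ℝ) (π : ∀ i, S → A i → ℝ) (s : S) : ℝ :=
  ∑ a : ∀ j, A j, jointDist π s a * u s a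

/-- `V` solves the Bellman equation for payoff `u`, kernel `P`, discount `δ`, profile `π`. -/
def IsValueFun [Fintype S] [Fintype I] [DecidableEq I] [∀ i, Fintype (A i)]
    (δ : ℝ) (P : S → (∀ i, A i) → S → ℝ) (u : S → (∀ i, A i) → ℝ)
    (π : ∀ i, S → A i → ℝ) (V : S → ℝ) : Prop :=
  ∀ s, V s = expPay u π s + δ * ∑ s', transMat P π s s' * V s'

/-- Player `i`'s Q-function, given a value function `V` for player `i` under `π`. -/
noncomputable def Qfun [Fintype S] [Fintype I] [DecidableEq I] [∀ i, Fintype (A i)]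
    [∀ i, DecidableEq (A i)]
    (δ : ℝ) (P : S → (∀ i, A i) → S → ℝ) (u : S → (∀ i, A i) → ℝ)
    (π : ∀ i, S → A i → ℝ) (V : S → ℝ) (i : I) (s : S) (ai : A i) : ℝ :=
  ∑ a : ∀ j, A j,
    if a i = ai then
      (∏ j ∈ Finset.univ.erase i, π j s (a j)) * (u s a + δ * ∑ s', P s a s' * V s')
    else 0

/-- Discounted state visitation distribution `d_μ^π`. -/
noncomputable def dvisit [Fintype S] [DecidableEq S] [Fintype I] [DecidableEq I]
    [∀ i, Fintype (A i)]
    (δ : ℝ) (P : S → (∀ i, A i) → S → ℝ) (π : ∀ i, S → A i → ℝ) (μ : S → ℝ) (s : S) : ℝ :=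
  (1 - δ) * ∑' k : ℕ, δ ^ k * ∑ s0, μ s0 * ((Matrix.of (transMat P π)) ^ k) s0 s

/-- Negative entropy `ν(p) = ∑ p log p` (with the convention `0 log 0 = 0`,
which holds automatically since `Real.log 0 = 0`). -/
noncomputable def negent {α : Type*} [Fintype α] (p : α → ℝ) : ℝ :=
  ∑ a, p a * Real.log (p a)

/-- `Ṽ` solves the Bellman equation of the `τ`-smoothed game for player `i`. -/
def IsSmoothedValueFun [Fintype S] [Fintype I] [DecidableEq I] [∀ i, Fintype (A i)]
    (δ τ : ℝ) (P : S → (∀ i, A i) → S → ℝ) (u : S → (∀ i, A i) → ℝ)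
    (π : ∀ i, S → A i → ℝ) (i : I) (Vt : S → ℝ) : Prop :=
  ∀ s, Vt s = expPay u π s - τ * negent (π i s) + δ * ∑ s', transMat P π s s' * Vt s'

/-- Smoothed Q-function `Q̃_i(s,a_i;π)`. -/
noncomputable def Qsmooth [Fintype S] [Fintype I] [DecidableEq I] [∀ i, Fintype (A i)]
    [∀ i, DecidableEq (A i)]
    (δ τ : ℝ) (P : S → (∀ i, A i) → S → ℝ) (u : S → (∀ i, A i) → ℝ)
    (π : ∀ i, S → A i → ℝ) (Vt : S → ℝ) (i : I) (s : S) (ai : A i) : ℝ :=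
  ∑ a : ∀ j, A j,
    if a i = ai then
      (∏ j ∈ Finset.univ.erase i, π j s (a j)) *
        (u s a - τ * negent (π i s) + δ * ∑ s', P s a s' * Vt s')
    else 0

/-- Euclidean (ℓ²) norm on `α → ℝ`. -/
noncomputable def l2norm {α : Type*} [Fintype α] (f : α → ℝ) : ℝ :=
  Real.sqrt (∑ a, f a ^ 2)

/-- Standard inner product on `α → ℝ`. -/
noncomputable def dotp {α : Type*} [Fintype α] (f g : α → ℝ) : ℝ :=
  ∑ a, f a * g a

/-- `y` is the Euclidean orthogonal projection of `x` onto the probability simplex. -/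
noncomputable def IsProjSimplex {α : Type*} [Fintype α] (x y : α → ℝ) : Prop :=
  IsProbVec y ∧ ∀ z, IsProbVec z → l2norm (fun a => y a - x a) ≤ l2norm (fun a => z a - x a)

/-- Softmax (smoothed best response) with temperature `τ`. -/
noncomputable def softmax {α : Type*} [Fintype α] (τ : ℝ) (q : α → ℝ) (a : α) : ℝ :=
  Real.exp (q a / τ) / ∑ a', Real.exp (q a' / τ)

end MarkovGameDefs

/-!
Let `P'` be the transition matrix after player `i` deviates to `πi'`. Averaging `Q_i` against any
policy of player `i` gives one step of that policy's Bellman operator applied to `V`. Hence the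
function `g s = ∑ a, (πi' s a - π i s a) * Q_i s a` satisfies `V' - V = g + δ P' (V' - V)`, that is,
`V' - V = (1 - δ P')⁻¹ g`. Expanding the inverse as a Neumann series, `μ (1 - δ P')⁻¹` is
`(1 - δ)⁻¹` times the discounted visitation distribution.
-/

section Neumann

open Matrix

variable {n : Type*} [Fintype n] [DecidableEq n]

theorem vecMul_tsum_pow_dotProduct {R : Type*} [Ring R] [TopologicalSpace R]
    [IsTopologicalRing R] [T2Space R] {M : Matrix n n R} (hM : Summable (M ^ ·))
    (μ : n → R) {f g : n → R} (hf : f = g + M *ᵥ f) :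
    (μ ᵥ* ∑' k : ℕ, M ^ k) ⬝ᵥ g = μ ⬝ᵥ f := by
  have hg : (1 - M) *ᵥ f = g := by
    rw [sub_mulVec, one_mulVec, sub_eq_iff_eq_add]
    exact hf
  rw [← hg, dotProduct_mulVec, vecMul_vecMul, hM.tsum_pow_mul_one_sub, vecMul_one]

theorem summable_smul_pow_of_mem_rowStochastic {M : Matrix n n ℝ}
    (hM : M ∈ rowStochastic ℝ n) {δ : ℝ} (hδ : |δ| < 1) :
    Summable fun k : ℕ => (δ • M) ^ k := by
  refine Pi.summable.2 fun s => Pi.summable.2 fun t => ?_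
  refine .of_norm_bounded (summable_geometric_of_lt_one (abs_nonneg δ) hδ) fun k => ?_
  have hMk := pow_mem hM k
  rw [smul_pow, Matrix.smul_apply, smul_eq_mul, norm_mul, norm_pow, Real.norm_eq_abs,
    Real.norm_of_nonneg (nonneg_of_mem_rowStochastic hMk)]
  exact mul_le_of_le_one_right (by positivity) (le_one_of_mem_rowStochastic hMk)

end Neumann

section MarkovGame

variable {S I : Type*} [Fintype I] [DecidableEq I] {A : I → Type*}

theorem jointDist_update (π : ∀ j, S → A j → ℝ) (i : I) (p : S → A i → ℝ) (s : S)
    (a : ∀ j, A j) :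
    jointDist (Function.update π i p) s a = p s (a i) * ∏ j ∈ univ.erase i, π j s (a j) := by
  rw [jointDist, ← mul_prod_erase _ _ (mem_univ i), Function.update_self]
  congr 1
  refine prod_congr rfl fun j hj => ?_
  rw [Function.update_of_ne (ne_of_mem_erase hj)]

variable [∀ i, Fintype (A i)]

theorem IsPolicy.update {π : ∀ j, S → A j → ℝ} (hπ : IsPolicy π) {i : I} {p : S → A i → ℝ}
    (hp : ∀ s, IsProbVec (p s)) : IsPolicy (Function.update π i p) :=
  (Function.forall_update_iff π fun _ q => ∀ s, IsProbVec (q s)).2 ⟨hp, fun j _ => hπ j⟩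

theorem IsPolicy.isProbVec_jointDist {π : ∀ j, S → A j → ℝ} (hπ : IsPolicy π) (s : S) :
    IsProbVec (jointDist π s) := by
  refine ⟨fun a => prod_nonneg fun j _ => (hπ j s).1 _, ?_⟩
  simp only [jointDist]
  rw [← Fintype.prod_sum fun j b => π j s b]
  exact prod_eq_one fun j _ => (hπ j s).2

variable [Fintype S]

theorem sum_transMat_mul (P : S → (∀ i, A i) → S → ℝ) (π : ∀ j, S → A j → ℝ) (s : S)
    (f : S → ℝ) :
    ∑ s', transMat P π s s' * f s' = ∑ a, jointDist π s a * ∑ s', P s a s' * f s' := by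
  simp only [transMat, sum_mul, mul_sum, mul_assoc]
  exact sum_comm

theorem IsKernel.transMat_mem_rowStochastic [DecidableEq S] {P : S → (∀ i, A i) → S → ℝ}
    (hP : IsKernel P) {π : ∀ j, S → A j → ℝ} (hπ : IsPolicy π) :
    Matrix.of (transMat P π) ∈ Matrix.rowStochastic ℝ S := by
  refine Matrix.mem_rowStochastic_iff_sum.2 ⟨fun s s' => ?_, fun s => ?_⟩
  · exact sum_nonneg fun a _ => mul_nonneg ((hπ.isProbVec_jointDist s).1 a) ((hP s a).1 s')
  · calc ∑ s', transMat P π s s' = ∑ a, jointDist π s a * ∑ s', P s a s' := by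
          simpa only [Pi.one_apply, mul_one] using sum_transMat_mul P π s 1
      _ = ∑ a, jointDist π s a := by simp only [(hP s _).2, mul_one]
      _ = 1 := (hπ.isProbVec_jointDist s).2

theorem dvisit_eq_smul_vecMul_tsum [DecidableEq S] {δ : ℝ} {P : S → (∀ i, A i) → S → ℝ}
    {π : ∀ j, S → A j → ℝ} (hsum : Summable fun k : ℕ => (δ • Matrix.of (transMat P π)) ^ k)
    (μ : S → ℝ) :
    dvisit δ P π μ
      = (1 - δ) • Matrix.vecMul μ (∑' k : ℕ, (δ • Matrix.of (transMat P π)) ^ k) := by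
  funext s
  have hentry (s₀ : S) := Pi.hasSum.1 (Pi.hasSum.1 hsum.hasSum s₀) s
  have hvisit := hasSum_sum fun s₀ (_ : s₀ ∈ univ) => (hentry s₀).mul_left (μ s₀)
  rw [dvisit, Pi.smul_apply, smul_eq_mul, Matrix.vecMul, dotProduct, ← hvisit.tsum_eq]
  congr 1
  refine tsum_congr fun k => ?_
  simp only [smul_pow, Matrix.smul_apply, smul_eq_mul, mul_sum, mul_left_comm]

theorem sum_dvisit_mul_of_bellman [DecidableEq S] {δ : ℝ} (hδ : |δ| < 1)
    {P : S → (∀ i, A i) → S → ℝ} (hP : IsKernel P) {π : ∀ j, S → A j → ℝ} (hπ : IsPolicy π)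
    (μ : S → ℝ) {f g : S → ℝ} (hf : ∀ s, f s = g s + δ * ∑ s', transMat P π s s' * f s') :
    ∑ s, dvisit δ P π μ s * g s = (1 - δ) * ∑ s, μ s * f s := by
  have hsum := summable_smul_pow_of_mem_rowStochastic (hP.transMat_mem_rowStochastic hπ) hδ
  have hf' : f = g + Matrix.mulVec (δ • Matrix.of (transMat P π)) f := by
    rw [Matrix.smul_mulVec]
    exact funext hf
  calc dvisit δ P π μ ⬝ᵥ g
      = (1 - δ) * (Matrix.vecMul μ (∑' k : ℕ, (δ • Matrix.of (transMat P π)) ^ k) ⬝ᵥ g) := by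
        rw [dvisit_eq_smul_vecMul_tsum hsum, smul_dotProduct, smul_eq_mul]
    _ = (1 - δ) * (μ ⬝ᵥ f) := by rw [vecMul_tsum_pow_dotProduct hsum μ hf']

/-- The Bellman operator of the profile `π` for the payoff `u`; its fixed points are the functions
satisfying `IsValueFun δ P u π`. -/
noncomputable def bellmanOp (δ : ℝ) (P : S → (∀ i, A i) → S → ℝ) (u : S → (∀ i, A i) → ℝ)
    (π : ∀ j, S → A j → ℝ) (V : S → ℝ) (s : S) : ℝ :=
  expPay u π s + δ * ∑ s', transMat P π s s' * V s'

theorem bellmanOp_eq_sum_jointDist (δ : ℝ) (P : S → (∀ i, A i) → S → ℝ)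
    (u : S → (∀ i, A i) → ℝ) (π : ∀ j, S → A j → ℝ) (V : S → ℝ) (s : S) :
    bellmanOp δ P u π V s
      = ∑ a, jointDist π s a * (u s a + δ * ∑ s', P s a s' * V s') := by
  rw [bellmanOp, sum_transMat_mul, expPay, mul_sum, ← sum_add_distrib]
  exact sum_congr rfl fun a _ => by ring

theorem bellmanOp_sub_bellmanOp (δ : ℝ) (P : S → (∀ i, A i) → S → ℝ)
    (u : S → (∀ i, A i) → ℝ) (π : ∀ j, S → A j → ℝ) (V V' : S → ℝ) (s : S) :
    bellmanOp δ P u π V' s - bellmanOp δ P u π V s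
      = δ * ∑ s', transMat P π s s' * (V' s' - V s') := by
  simp only [bellmanOp, mul_sub, sum_sub_distrib]
  ring

variable [∀ i, DecidableEq (A i)]

theorem sum_mul_Qfun (δ : ℝ) (P : S → (∀ i, A i) → S → ℝ) (u : S → (∀ i, A i) → ℝ) (i : I)
    (π : ∀ j, S → A j → ℝ) (p : S → A i → ℝ) (V : S → ℝ) (s : S) :
    ∑ ai, p s ai * Qfun δ P u π V i s ai = bellmanOp δ P u (Function.update π i p) V s := by
  simp only [bellmanOp_eq_sum_jointDist, jointDist_update, Qfun, mul_sum univ _ (p s _)]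
  rw [sum_comm]
  refine sum_congr rfl fun a _ => ?_
  rw [Fintype.sum_eq_single (a i) fun ai hai => by rw [if_neg hai.symm, mul_zero], if_pos rfl,
    mul_assoc]

theorem IsValueFun.sum_policy_sub_mul_Qfun {δ : ℝ} {P : S → (∀ i, A i) → S → ℝ}
    {u : S → (∀ i, A i) → ℝ} {π : ∀ j, S → A j → ℝ} {V : S → ℝ} (hV : IsValueFun δ P u π V)
    (i : I) (p : S → A i → ℝ) (s : S) :
    ∑ ai, (p s ai - π i s ai) * Qfun δ P u π V i s ai
      = bellmanOp δ P u (Function.update π i p) V s - V s := by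
  simp only [sub_mul, sum_sub_distrib, sum_mul_Qfun, Function.update_eq_self]
  rw [hV s, bellmanOp, bellmanOp]

theorem performance_difference_lemma_general [DecidableEq S] {δ : ℝ} (hδ : |δ| < 1)
    {P : S → (∀ i, A i) → S → ℝ} (hP : IsKernel P) {u : S → (∀ i, A i) → ℝ} (i : I)
    {π : ∀ j, S → A j → ℝ} {πi' : S → A i → ℝ} (hπ' : IsPolicy (Function.update π i πi'))
    (μ : S → ℝ) {V V' : S → ℝ} (hV : IsValueFun δ P u π V)
    (hV' : IsValueFun δ P u (Function.update π i πi') V') :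
    (∑ s, μ s * V' s) - (∑ s, μ s * V s) =
      (1 / (1 - δ)) * ∑ s, ∑ ai,
        dvisit δ P (Function.update π i πi') μ s *
          ((πi' s ai - π i s ai) * Qfun δ P u π V i s ai) := by
  have hbellman (s : S) : V' s - V s
      = (bellmanOp δ P u (Function.update π i πi') V s - V s)
        + δ * ∑ s', transMat P (Function.update π i πi') s s' * (V' s' - V s') := by
    have hfix : V' s = bellmanOp δ P u (Function.update π i πi') V' s := hV' s
    rw [← bellmanOp_sub_bellmanOp δ P u, ← hfix]
    ring
  have hδ' : 1 - δ ≠ 0 := sub_ne_zero.2 (lt_of_abs_lt hδ).ne'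
  simp only [← mul_sum, hV.sum_policy_sub_mul_Qfun, sum_dvisit_mul_of_bellman hδ hP hπ' μ hbellman]
  rw [one_div, inv_mul_cancel_left₀ hδ', ← sum_sub_distrib]
  simp only [mul_sub]

end MarkovGame

/-- **Performance difference lemma for Markov games.** -/
theorem performance_difference_lemma
    {S I : Type*} [Fintype S] [Nonempty S] [DecidableEq S]
    [Fintype I] [Nonempty I] [DecidableEq I]
    {A : I → Type*} [∀ i, Fintype (A i)] [∀ i, Nonempty (A i)] [∀ i, DecidableEq (A i)]
    (δ : ℝ) (hδ : 0 < δ) (hδ1 : δ < 1)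
    (P : S → (∀ i, A i) → S → ℝ) (hP : IsKernel P)
    (u : I → S → (∀ i, A i) → ℝ)
    (i : I) (π : ∀ j, S → A j → ℝ) (hπ : IsPolicy π)
    (πi' : S → A i → ℝ) (hπi' : ∀ s, IsProbVec (πi' s))
    (μ : S → ℝ) (hμ : IsProbVec μ)
    (V V' : S → ℝ)
    (hV : IsValueFun δ P (u i) π V)
    (hV' : IsValueFun δ P (u i) (Function.update π i πi') V') :
    (∑ s, μ s * V' s) - (∑ s, μ s * V s) =
      (1 / (1 - δ)) * ∑ s, ∑ ai,
        dvisit δ P (Function.update π i πi') μ s *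
          ((πi' s ai - π i s ai) * Qfun δ P (u i) π V i s ai) :=
  performance_difference_lemma_general (abs_lt.2 ⟨by linarith, hδ1⟩) hP i (hπ.update hπi') μ hV hV'
end

section
/- (Key inequality for Lemma technical (a): the entropy-regularized improvement between two softmax policies is controlled by their Euclidean distance.) Let A be a finite nonempty set, τ > 0, M ≥ 0, and Q, Q' : A → ℝ with |Q(a)| ≤ M and |Q'(a)| ≤ M for all a ∈ A. Define π(a) = exp(Q'(a)/τ)/∑_{a'} exp(Q'(a')/τ) and π⁺(a) = exp(Q(a)/τ)/∑_{a'} exp(Q(a')/τ), and ν(p) = ∑_{a} p(a)·log p(a). Then ( ∑_a π⁺(a)·Q(a) − τ·ν(π⁺) ) − ( ∑_a π(a)·Q(a) − τ·ν(π) ) ≤ √|A|·(3M + τ·log|A|)·‖π⁺ − π‖₂. -/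
open Finset

/-!
Write `J_Q(p) = ⟨p, Q⟩ - τ ν(p)`. By Gibbs' inequality the policy `π = softmax τ Q'` maximizes
`J_{Q'}` over the probability simplex. The entropy terms of `J_Q` and `J_{Q'}` agree, so
`J_Q(p) - J_Q(π) = (J_{Q'}(p) - J_{Q'}(π)) + ⟨p - π, Q - Q'⟩ ≤ ⟨p - π, Q - Q'⟩`
for every probability vector `p`, and Cauchy–Schwarz bounds the right-hand side by
`‖Q - Q'‖₂ ‖p - π‖₂`.
-/

section Gibbs

theorem mul_log_add_le_mul_log_add {x y : ℝ} (hx : 0 ≤ x) (hy : 0 ≤ y) (hyx : y = 0 → x = 0) :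
    x * Real.log y + x ≤ x * Real.log x + y := by
  obtain rfl | x_pos := hx.eq_or_lt
  · simpa using hy
  have y_pos : 0 < y := hy.lt_of_ne' fun h => x_pos.ne' (hyx h)
  have log_ratio_le : Real.log y - Real.log x ≤ y / x - 1 := by
    rw [← Real.log_div y_pos.ne' x_pos.ne']
    exact Real.log_le_sub_one_of_pos (div_pos y_pos x_pos)
  have mul_log_ratio_le : x * (Real.log y - Real.log x) ≤ y - x :=
    calc x * (Real.log y - Real.log x) ≤ x * (y / x - 1) := by gcongr
      _ = y - x := by field_simp
  linarith

theorem sum_mul_log_le_negent {α : Type*} [Fintype α] {p q : α → ℝ} (hp : ∀ a, 0 ≤ p a)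
    (hq : ∀ a, 0 ≤ q a) (hqp : ∀ a, q a = 0 → p a = 0) (hsum : ∑ a, q a ≤ ∑ a, p a) :
    ∑ a, p a * Real.log (q a) ≤ negent p := by
  have sum_le : ∑ a, (p a * Real.log (q a) + p a) ≤ ∑ a, (p a * Real.log (p a) + q a) :=
    sum_le_sum fun a _ => mul_log_add_le_mul_log_add (hp a) (hq a) (hqp a)
  simp only [sum_add_distrib] at sum_le
  unfold negent
  linarith

end Gibbs

section Euclidean

variable {α : Type*} [Fintype α]

theorem l2norm_nonneg (f : α → ℝ) : 0 ≤ l2norm f :=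
  Real.sqrt_nonneg _

theorem dotp_le_l2norm_mul_l2norm (f g : α → ℝ) : dotp f g ≤ l2norm f * l2norm g :=
  Real.sum_mul_le_sqrt_mul_sqrt univ f g

theorem l2norm_le_sqrt_card_mul {f : α → ℝ} {C : ℝ} (hC : 0 ≤ C) (hf : ∀ a, |f a| ≤ C) :
    l2norm f ≤ Real.sqrt (Fintype.card α) * C := by
  refine Real.sqrt_le_iff.2 ⟨by positivity, ?_⟩
  calc ∑ a, f a ^ 2 ≤ ∑ _a : α, C ^ 2 :=
      sum_le_sum fun a _ => sq_le_sq.2 ((hf a).trans (le_abs_self C))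
    _ = (Real.sqrt (Fintype.card α) * C) ^ 2 := by
      rw [sum_const, card_univ, nsmul_eq_mul, mul_pow, Real.sq_sqrt (Nat.cast_nonneg _)]

theorem l2norm_sub_le_sqrt_card_mul {f g : α → ℝ} {C D : ℝ} (hC : 0 ≤ C) (hD : 0 ≤ D)
    (hf : ∀ a, |f a| ≤ C) (hg : ∀ a, |g a| ≤ D) :
    l2norm (f - g) ≤ Real.sqrt (Fintype.card α) * (C + D) :=
  l2norm_le_sqrt_card_mul (add_nonneg hC hD) fun a =>
    (abs_sub (f a) (g a)).trans (add_le_add (hf a) (hg a))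

end Euclidean

section Softmax

variable {α : Type*} [Fintype α]

theorem IsProbVec.nonempty {p : α → ℝ} (hp : IsProbVec p) : Nonempty α := by
  by_contra h
  rw [not_nonempty_iff] at h
  simpa using hp.2

theorem sum_exp_pos [Nonempty α] (f : α → ℝ) : 0 < ∑ a, Real.exp (f a) :=
  sum_pos (fun _ _ => Real.exp_pos _) univ_nonempty

theorem softmax_pos (τ : ℝ) (q : α → ℝ) (a : α) : 0 < softmax τ q a :=
  have : Nonempty α := ⟨a⟩
  div_pos (Real.exp_pos _) (sum_exp_pos _)

theorem isProbVec_softmax [Nonempty α] (τ : ℝ) (q : α → ℝ) : IsProbVec (softmax τ q) := by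
  refine ⟨fun a => (softmax_pos τ q a).le, ?_⟩
  simp only [softmax, ← sum_div, div_self (sum_exp_pos _).ne']

/-- The entropy-regularized payoff `⟨p, Q⟩ - τ ν(p)` of the mixed action `p` against the
action values `Q`. -/
noncomputable def regPayoff (τ : ℝ) (Q p : α → ℝ) : ℝ :=
  dotp p Q - τ * negent p

/-- The free energy `τ log ∑ exp (Q / τ)`, which for `τ > 0` is the maximum of the
entropy-regularized payoff over the probability simplex. -/
noncomputable def freeEnergy (τ : ℝ) (Q : α → ℝ) : ℝ :=
  τ * Real.log (∑ a, Real.exp (Q a / τ))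

theorem mul_log_softmax {τ : ℝ} (hτ : τ ≠ 0) (Q : α → ℝ) (a : α) :
    τ * Real.log (softmax τ Q a) = Q a - freeEnergy τ Q := by
  have : Nonempty α := ⟨a⟩
  rw [softmax, Real.log_div (Real.exp_pos _).ne' (sum_exp_pos _).ne', Real.log_exp, mul_sub,
    mul_div_cancel₀ _ hτ, freeEnergy]

theorem mul_sum_mul_log_softmax {τ : ℝ} (hτ : τ ≠ 0) (Q : α → ℝ) {p : α → ℝ}
    (hp : ∑ a, p a = 1) :
    τ * ∑ a, p a * Real.log (softmax τ Q a) = dotp p Q - freeEnergy τ Q := by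
  simp only [mul_sum, mul_left_comm τ, mul_log_softmax hτ, mul_sub, sum_sub_distrib, ← sum_mul,
    hp, one_mul, dotp]

theorem regPayoff_softmax [Nonempty α] {τ : ℝ} (hτ : τ ≠ 0) (Q : α → ℝ) :
    regPayoff τ Q (softmax τ Q) = freeEnergy τ Q := by
  rw [regPayoff, negent, mul_sum_mul_log_softmax hτ Q (isProbVec_softmax τ Q).2, sub_sub_cancel]

theorem regPayoff_le_freeEnergy {τ : ℝ} (hτ : 0 < τ) (Q : α → ℝ) {p : α → ℝ}
    (hp : IsProbVec p) : regPayoff τ Q p ≤ freeEnergy τ Q := by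
  have := hp.nonempty
  have hsoft := isProbVec_softmax τ Q
  have gibbs : ∑ a, p a * Real.log (softmax τ Q a) ≤ negent p :=
    sum_mul_log_le_negent hp.1 hsoft.1 (fun a h => absurd h (softmax_pos τ Q a).ne')
      (hsoft.2.trans hp.2.symm).le
  have scaled_gibbs := mul_le_mul_of_nonneg_left gibbs hτ.le
  rw [mul_sum_mul_log_softmax hτ.ne' Q hp.2] at scaled_gibbs
  unfold regPayoff
  linarith

theorem regPayoff_sub_regPayoff (τ : ℝ) (Q Q' p q : α → ℝ) :
    regPayoff τ Q p - regPayoff τ Q q =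
      regPayoff τ Q' p - regPayoff τ Q' q + dotp (p - q) (Q - Q') := by
  simp only [regPayoff, dotp, Pi.sub_apply, sub_mul, mul_sub, sum_sub_distrib]
  ring

theorem regPayoff_sub_regPayoff_softmax_le_dotp {τ : ℝ} (hτ : 0 < τ) (Q Q' : α → ℝ)
    {p : α → ℝ} (hp : IsProbVec p) :
    regPayoff τ Q p - regPayoff τ Q (softmax τ Q') ≤ dotp (p - softmax τ Q') (Q - Q') := by
  have := hp.nonempty
  rw [regPayoff_sub_regPayoff τ Q Q', regPayoff_softmax hτ.ne']
  linarith [regPayoff_le_freeEnergy hτ Q' hp]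

theorem softmax_improvement_bounded_by_distance_general {τ : ℝ} (hτ : 0 < τ) (Q Q' : α → ℝ)
    {p : α → ℝ} (hp : IsProbVec p) :
    regPayoff τ Q p - regPayoff τ Q (softmax τ Q') ≤
      l2norm (Q - Q') * l2norm (p - softmax τ Q') :=
  calc regPayoff τ Q p - regPayoff τ Q (softmax τ Q')
    _ ≤ dotp (p - softmax τ Q') (Q - Q') := regPayoff_sub_regPayoff_softmax_le_dotp hτ Q Q' hp
    _ ≤ l2norm (p - softmax τ Q') * l2norm (Q - Q') := dotp_le_l2norm_mul_l2norm _ _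
    _ = l2norm (Q - Q') * l2norm (p - softmax τ Q') := mul_comm _ _

end Softmax

/-- **Key inequality:** the entropy-regularized improvement between two softmax policies is
controlled by their Euclidean distance. -/
theorem softmax_improvement_bounded_by_distance
    {A : Type*} [Fintype A] [Nonempty A]
    (τ M : ℝ) (hτ : 0 < τ) (hM : 0 ≤ M)
    (Q Q' : A → ℝ) (hQ : ∀ a, |Q a| ≤ M) (hQ' : ∀ a, |Q' a| ≤ M) :
    ((∑ a, softmax τ Q a * Q a) - τ * negent (softmax τ Q)) -
        ((∑ a, softmax τ Q' a * Q a) - τ * negent (softmax τ Q')) ≤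
      Real.sqrt (Fintype.card A) * (3 * M + τ * Real.log (Fintype.card A)) *
        l2norm (fun a => softmax τ Q a - softmax τ Q' a) := by
  have two_mul_le : M + M ≤ 3 * M + τ * Real.log (Fintype.card A) := by
    linarith [mul_nonneg hτ.le (Real.log_natCast_nonneg (Fintype.card A))]
  have dist_le : l2norm (Q - Q') ≤
      Real.sqrt (Fintype.card A) * (3 * M + τ * Real.log (Fintype.card A)) :=
    (l2norm_sub_le_sqrt_card_mul hM hM hQ hQ').trans
      (mul_le_mul_of_nonneg_left two_mul_le (Real.sqrt_nonneg _))
  exact (softmax_improvement_bounded_by_distance_general hτ Q Q' (isProbVec_softmax τ Q)).trans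
    (mul_le_mul_of_nonneg_right dist_le (l2norm_nonneg _))
end
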